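/- arXiv:1212.5694 — 2 statements merged into one kernel-verified Lean document; each statement's English description precedes it below -/
import Mathlib

section
/- Let R be a commutative ring and X = X_1 × ⋯ × X_n a d-grid such that N(x) is a unit in R for every x ∈ X (e.g. any grid over a field). Let P ∈ R[X_1,…,X_n] and let ε be a d-leading multiindex of P, i.e. ε_j ≤ d_j for all j and every monomial X^δ occurring in P (coefficient ≠ 0) satisfies either δ = ε, or there is some j with δ_j ≠ ε_j and δ_j ≤ d_j. Then the coefficient of X^ε in P equals Σ_{x ∈ X} ψ_{ε,x} · N(x)^{−1} · P(x). -/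
open MvPolynomial Finset

lemma aux_ring_inverse_prod {R ι : Type*} [CommRing R] (s : Finset ι) (f : ι → R) :
    Ring.inverse (∏ j ∈ s, f j) = ∏ j ∈ s, Ring.inverse (f j) := by
  classical
  induction s using Finset.induction_on with
  | empty => simp
  | insert a s ha ih =>
    rw [Finset.prod_insert ha, Finset.prod_insert ha, Ring.mul_inverse_rev, ih, mul_comm]

lemma aux_eq_zero {R : Type*} [CommRing R] (S : Finset R)
    (hu : ∀ a ∈ S, ∀ b ∈ S, a ≠ b → IsUnit (a - b)) (p : Polynomial R)
    (hp : p.degree < S.card) (h0 : ∀ a ∈ S, p.eval a = 0) : p = 0 := by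
  by_contra hne
  have : Nontrivial R := by
    by_contra h
    rw [not_nontrivial_iff_subsingleton] at h
    exact hne (Subsingleton.elim _ _)
  have hdvd : ∏ a ∈ S, (Polynomial.X - Polynomial.C a) ∣ p := by
    apply Finset.prod_dvd_of_coprime
    · intro a ha b hb hab
      exact Polynomial.isCoprime_X_sub_C_of_isUnit_sub (hu a ha b hb hab)
    · intro a ha
      exact Polynomial.dvd_iff_isRoot.mpr (h0 a ha)
  have hm : (∏ a ∈ S, (Polynomial.X - Polynomial.C a)).Monic :=
    Polynomial.monic_prod_of_monic _ _ fun a _ => Polynomial.monic_X_sub_C a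
  refine hm.not_dvd_of_degree_lt hne ?_ hdvd
  rw [Polynomial.degree_eq_natDegree hm.ne_zero,
    Polynomial.natDegree_prod_of_monic _ _ fun a _ => Polynomial.monic_X_sub_C a]
  simpa using hp

lemma aux_univariate {R : Type*} [CommRing R] [DecidableEq R] (S : Finset R)
    (hS : S.Nonempty) (d : ℕ) (hd : d = S.card - 1)
    (hu : ∀ a ∈ S, IsUnit (∏ z ∈ S.erase a, (a - z))) (e k : ℕ) (he : e ≤ d) (hk : k ≤ d) :
    ∑ x ∈ S, (∑ Γ ∈ (S.erase x).powersetCard (d - e), ∏ γ ∈ Γ, (-γ))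
      * Ring.inverse (∏ z ∈ S.erase x, (x - z)) * x ^ k = if k = e then 1 else 0 := by
  nontriviality R
  have hpos := hS.card_pos
  set L : R → Polynomial R := fun x => ∏ z ∈ S.erase x, (Polynomial.X + Polynomial.C (-z)) with hL
  have hLe : ∀ x y, (L x).eval y = ∏ z ∈ S.erase x, (y - z) := by
    intro x y
    simp [hL, Polynomial.eval_prod, sub_eq_add_neg]
  have hcard : ∀ x ∈ S, (S.erase x).card = d := fun x hx => by
    rw [Finset.card_erase_of_mem hx, hd]
  have hLc : ∀ x ∈ S, (L x).coeff e = ∑ Γ ∈ (S.erase x).powersetCard (d - e), ∏ γ ∈ Γ, (-γ) := by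
    intro x hx
    simp only [hL]
    rw [Finset.prod_X_add_C_coeff _ _ (by rw [hcard x hx]; exact he), hcard x hx]
  have hLd : ∀ x ∈ S, (L x).degree < S.card := by
    intro x hx
    have hm : (L x).Monic := Polynomial.monic_prod_of_monic _ _
      fun a _ => Polynomial.monic_X_add_C (-a)
    rw [Polynomial.degree_eq_natDegree hm.ne_zero,
      Polynomial.natDegree_prod_of_monic _ _ fun a _ => Polynomial.monic_X_add_C (-a)]
    simp only [Polynomial.natDegree_X_add_C, Finset.sum_const, hcard x hx, smul_eq_mul, mul_one]
    exact_mod_cast (by omega : d < S.card)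
  have key : ∑ x ∈ S, Polynomial.C (Ring.inverse (∏ z ∈ S.erase x, (x - z)) * x ^ k) * L x
      - Polynomial.X ^ k = 0 := by
    apply aux_eq_zero S
    · intro a ha b hb hab
      exact isUnit_of_dvd_unit
        (Finset.dvd_prod_of_mem (fun z => a - z) (Finset.mem_erase.mpr ⟨hab.symm, hb⟩)) (hu a ha)
    · rw [← Polynomial.mem_degreeLT]
      refine Submodule.sub_mem _ (Submodule.sum_mem _ fun x hx => ?_) ?_
      · rw [← Polynomial.smul_eq_C_mul]
        exact Submodule.smul_mem _ _ (Polynomial.mem_degreeLT.mpr (hLd x hx))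
      · rw [Polynomial.mem_degreeLT, Polynomial.degree_X_pow]
        exact_mod_cast (by omega : k < S.card)
    · intro a ha
      rw [Polynomial.eval_sub, Polynomial.eval_finset_sum, Finset.sum_eq_single a]
      · simp only [Polynomial.eval_mul, Polynomial.eval_C, hLe, Polynomial.eval_pow,
          Polynomial.eval_X]
        rw [mul_right_comm, Ring.inverse_mul_cancel _ (hu a ha)]
        ring
      · intro b hb hba
        rw [Polynomial.eval_mul, hLe,
          Finset.prod_eq_zero (Finset.mem_erase.mpr ⟨hba.symm, ha⟩) (sub_self a), mul_zero]
      · exact fun h => absurd ha h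
  have hc := congrArg (fun p => Polynomial.coeff p e) (sub_eq_zero.mp key)
  simp only [Polynomial.finset_sum_coeff, Polynomial.coeff_C_mul, Polynomial.coeff_X_pow] at hc
  rw [show (if k = e then (1 : R) else 0) = if e = k then 1 else 0 by simp only [eq_comm], ← hc]
  refine Finset.sum_congr rfl fun x hx => ?_
  rw [hLc x hx]
  ring

/-- Coefficient formula over a division grid, for a `d`-leading multiindex `ε` of `P`:
`P_ε = ∑_{x∈X} ψ_{ε,x} N(x)⁻¹ P(x)`. -/
theorem coeff_formula_d_leading {R : Type*} [CommRing R] [DecidableEq R] {n : ℕ}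
    (X : Fin n → Finset R) (hX : ∀ j, (X j).Nonempty)
    (d : Fin n → ℕ) (hd : ∀ j, d j = (X j).card - 1)
    (hN : ∀ x : Fin n → R, (∀ j, x j ∈ X j) →
      IsUnit (∏ j, ∏ z ∈ (X j).erase (x j), (x j - z)))
    (P : MvPolynomial (Fin n) R) (ε : Fin n → ℕ) (hε : ∀ j, ε j ≤ d j)
    (hlead : ∀ δ : Fin n →₀ ℕ, MvPolynomial.coeff δ P ≠ 0 →
      δ = Finsupp.equivFunOnFinite.symm ε ∨ ∃ j, δ j ≠ ε j ∧ δ j ≤ d j) :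
    MvPolynomial.coeff (Finsupp.equivFunOnFinite.symm ε) P
      = ∑ x ∈ Fintype.piFinset X,
          (∏ j, ∑ Γ ∈ ((X j).erase (x j)).powersetCard (d j - ε j), ∏ γ ∈ Γ, (-γ))
          * Ring.inverse (∏ j, ∏ z ∈ (X j).erase (x j), (x j - z))
          * MvPolynomial.eval x P := by
  have hu : ∀ j, ∀ a ∈ X j, IsUnit (∏ z ∈ (X j).erase a, (a - z)) := by
    intro j a ha
    choose y hy using hX
    have h := hN (Function.update y j a) (fun i => by
      by_cases hij : i = j
      · subst hij; simpa using ha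
      · simpa [hij] using hy i)
    have h2 := isUnit_of_dvd_unit (Finset.dvd_prod_of_mem _ (Finset.mem_univ j)) h
    simpa using h2
  have huni := fun j (k : ℕ) (hk : k ≤ d j) =>
    aux_univariate (X j) (hX j) (d j) (hd j) (hu j) (ε j) k (hε j) hk
  have hmon : ∀ δ : Fin n →₀ ℕ, ∑ x ∈ Fintype.piFinset X,
      (∏ j, ∑ Γ ∈ ((X j).erase (x j)).powersetCard (d j - ε j), ∏ γ ∈ Γ, (-γ))
          * Ring.inverse (∏ j, ∏ z ∈ (X j).erase (x j), (x j - z)) * ∏ j, x j ^ δ j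
      = ∏ j, ∑ a ∈ X j, (∑ Γ ∈ ((X j).erase a).powersetCard (d j - ε j), ∏ γ ∈ Γ, (-γ))
          * Ring.inverse (∏ z ∈ (X j).erase a, (a - z)) * a ^ δ j := by
    intro δ
    rw [Finset.prod_univ_sum]
    refine Finset.sum_congr rfl fun x _ => ?_
    rw [aux_ring_inverse_prod, ← Finset.prod_mul_distrib, ← Finset.prod_mul_distrib]
  simp_rw [MvPolynomial.eval_eq', Finset.mul_sum]
  rw [Finset.sum_comm]
  simp_rw [mul_left_comm _ (MvPolynomial.coeff _ P), ← Finset.mul_sum, hmon]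
  rw [Finset.sum_eq_single (Finsupp.equivFunOnFinite.symm ε)]
  · rw [Finset.prod_eq_one, mul_one]
    intro j _
    simpa using huni j (ε j) (hε j)
  · intro δ hδ hne
    obtain h | ⟨j, hj, hjd⟩ := hlead δ (MvPolynomial.mem_support_iff.mp hδ)
    · exact absurd h hne
    · rw [Finset.prod_eq_zero (Finset.mem_univ j), mul_zero]
      rw [huni j (δ j) hjd, if_neg hj]
  · intro h
    rw [MvPolynomial.notMem_support_iff.mp h, zero_mul]
end

section
/- Let R be a commutative ring and X = X_1 × ⋯ × X_n an integral d-grid (for all j, differences of distinct elements of X_j are non-zero-divisors; e.g. R an integral domain). Let P ∈ R[X_1,…,X_n] have total degree deg(P) ≤ d_1 + ⋯ + d_n and suppose the coefficient of X_1^{d_1}⋯X_n^{d_n} in P is zero (this holds in particular when deg(P) < d_1 + ⋯ + d_n). Then the number of points x ∈ X with P(x) ≠ 0 is not equal to 1. -/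
open MvPolynomial Finset

theorem exists_weights {R : Type*} [CommRing R] (S : Finset R) (hS : S.Nonempty)
    (hint : ∀ x ∈ S, ∀ w ∈ S, x ≠ w → x - w ∈ nonZeroDivisors R) :
    ∃ w : R → R, (∀ x ∈ S, w x ∈ nonZeroDivisors R) ∧
      ∀ k < S.card - 1, ∑ x ∈ S, w x * x ^ k = 0 := by
  classical
  obtain ⟨m, hm⟩ : ∃ m, S.card = m + 1 := ⟨S.card - 1, by have := hS.card_pos; omega⟩
  let e : S ≃ Fin (m + 1) := S.equivFinOfCardEq hm
  let v : Fin (m + 1) → R := fun i => (e.symm i : R)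
  have hv : Function.Injective v := Subtype.val_injective.comp e.symm.injective
  have hvS : ∀ i, v i ∈ S := fun i => (e.symm i).2
  let A := (Matrix.vandermonde v).adjugate
  have hA : ∀ i, A (Fin.last m) i ∈ nonZeroDivisors R := by
    intro i
    have h1 : (Matrix.vandermonde v).submatrix i.succAbove (Fin.last m).succAbove
        = Matrix.vandermonde (v ∘ i.succAbove) := by
      ext a b
      simp [Matrix.vandermonde_apply]
    simp only [A]
    rw [Matrix.adjugate_fin_succ_eq_det_submatrix, h1, Matrix.det_vandermonde]
    refine mul_mem (pow_mem ?_ _) (prod_mem fun a _ => prod_mem fun b hb => ?_)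
    · exact (isUnit_one.neg).mem_nonZeroDivisors
    · apply hint _ (hvS _) _ (hvS _)
      intro h
      have := Fin.succAbove_right_injective (hv h)
      simp [this] at hb
  refine ⟨fun x => if h : x ∈ S then A (Fin.last m) (e ⟨x, h⟩) else 0, ?_, ?_⟩
  · intro x hx
    simp only [hx, dif_pos]
    exact hA _
  · intro k hk
    have h2 := congrFun (congrFun (Matrix.adjugate_mul (Matrix.vandermonde v)) (Fin.last m))
      ⟨k, by omega⟩
    have h3 : Fin.last m ≠ ⟨k, by omega⟩ := by
      intro h
      have := congrArg Fin.val h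
      simp at this
      omega
    rw [Matrix.smul_apply, Matrix.one_apply_ne h3, smul_zero, Matrix.mul_apply] at h2
    rw [← h2, ← Finset.sum_coe_sort, ← e.symm.sum_comp]
    refine Finset.sum_congr rfl fun i _ => ?_
    simp [A, Matrix.vandermonde_apply, v]

/-- Over an integral grid, a polynomial of total degree `≤ Σ d_j` with vanishing
`d`-coefficient does not have exactly one nonvanishing point on the grid. -/
theorem not_exactly_one_nonzero {R : Type*} [CommRing R] {n : ℕ}
    (X : Fin n → Finset R) (hX : ∀ j, (X j).Nonempty)
    (d : Fin n → ℕ) (hd : ∀ j, d j = (X j).card - 1)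
    (hint : ∀ j, ∀ x ∈ X j, ∀ w ∈ X j, x ≠ w → x - w ∈ nonZeroDivisors R)
    (P : MvPolynomial (Fin n) R) (hdeg : P.totalDegree ≤ ∑ j, d j)
    (hcoeff : MvPolynomial.coeff (Finsupp.equivFunOnFinite.symm d) P = 0) :
    {x : Fin n → R | (∀ j, x j ∈ X j) ∧ MvPolynomial.eval x P ≠ 0}.ncard ≠ 1 := by
  classical
  intro hcard
  obtain ⟨a, ha⟩ := Set.ncard_eq_one.mp hcard
  choose w hw hw0 using fun j => exists_weights (X j) (hX j) (hint j)
  have haS : (∀ j, a j ∈ X j) ∧ MvPolynomial.eval a P ≠ 0 := by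
    have : a ∈ ({a} : Set (Fin n → R)) := rfl
    rwa [← ha] at this
  have hsum : ∑ x ∈ Fintype.piFinset X, (∏ j, w j (x j)) * eval x P = 0 := by
    simp_rw [MvPolynomial.eval_eq', Finset.mul_sum]
    rw [Finset.sum_comm]
    refine Finset.sum_eq_zero fun m hm => ?_
    have : ∃ j, m j < d j := by
      by_contra! hcon
      have h1 : ∑ j, m j ≤ ∑ j, d j := by
        refine le_trans ?_ hdeg
        have := MvPolynomial.le_totalDegree hm
        rwa [Finsupp.sum_fintype _ _ (fun _ => rfl)] at this
      have h2 := (Finset.sum_eq_sum_iff_of_le (fun j _ => hcon j)).1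
        (le_antisymm (Finset.sum_le_sum fun j _ => hcon j) h1)
      have h3 : m = Finsupp.equivFunOnFinite.symm d := by
        ext j
        simp [h2 j (Finset.mem_univ j)]
      rw [MvPolynomial.mem_support_iff, h3] at hm
      exact hm hcoeff
    obtain ⟨j, hj⟩ := this
    have h4 : ∑ x ∈ Fintype.piFinset X, ∏ i, (w i (x i) * x i ^ m i) = 0 := by
      rw [← Finset.prod_univ_sum X (fun i y => w i y * y ^ m i)]
      exact Finset.prod_eq_zero (Finset.mem_univ j) (hw0 j _ (hd j ▸ hj))
    rw [← mul_zero (coeff m P), ← h4, Finset.mul_sum]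
    refine Finset.sum_congr rfl fun x _ => ?_
    rw [Finset.prod_mul_distrib]
    ring
  rw [Finset.sum_eq_single a] at hsum
  · have hreg : (∏ j, w j (a j)) ∈ nonZeroDivisors R :=
      prod_mem fun j _ => hw j _ (haS.1 j)
    exact haS.2 ((mul_left_mem_nonZeroDivisors_eq_zero_iff hreg).1 hsum)
  · intro b hb hba
    have : eval b P = 0 := by
      by_contra hne
      have hb' : b ∈ ({a} : Set (Fin n → R)) := by
        rw [← ha]
        exact ⟨fun j => Fintype.mem_piFinset.1 hb j, hne⟩
      exact hba hb'
    rw [this, mul_zero]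
  · intro h
    exact absurd (Fintype.mem_piFinset.2 haS.1) h
end
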